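/- For every integer q ≥ 3 there exists a constant C_q > 0 such that for every integer n ≥ 2, every real δ with 0 < δ ≤ 1, and every spanoid S on [n] that is a q-LCS with error-tolerance δ, the rank of S satisfies rank(S) ≤ C_q · δ^{-1/(q-1)} · n^{(q-2)/(q-1)} · log₂ n. -/

import Mathlib

open scoped BigOperators

/-- A spanoid on ground set `X`: a set of inference rules `(A, i)`,
read as "`A` spans `i`". -/
abbrev SpanoidOn (X : Type) : Type := Set (Set X × X)

/-- The span of `T`: the smallest superset `T'` of `T` such that whenever `(A, i)` is a
rule with `A ⊆ T'`, also `i ∈ T'`. -/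
def sSpan {X : Type} (S : SpanoidOn X) (T : Set X) : Set X :=
  ⋂₀ {T' : Set X | T ⊆ T' ∧ ∀ p ∈ S, p.1 ⊆ T' → p.2 ∈ T'}

/-- The rank of a spanoid: the minimum size of a subset spanning the whole ground set. -/
noncomputable def sRank {X : Type} [Fintype X] (S : SpanoidOn X) : ℕ :=
  sInf {k : ℕ | ∃ T : Set X, T.ncard = k ∧ sSpan S T = Set.univ}

/-- A set is closed if it equals its own span. -/
def sClosed {X : Type} (S : SpanoidOn X) (B : Set X) : Prop := sSpan S B = B

/-- A set is open if its complement is closed. -/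
def sOpen {X : Type} (S : SpanoidOn X) (B : Set X) : Prop := sClosed S Bᶜ

/-- A code `C ⊆ K^X` is consistent with the spanoid `S` if for every rule `(A, i)` of `S`
there is a function `g` with `c i = g (c|_A)` for all codewords `c ∈ C`. -/
def sConsistent {X K : Type} (S : SpanoidOn X) (C : Set (X → K)) : Prop :=
  ∀ p ∈ S, ∃ g : (↥p.1 → K) → K, ∀ c ∈ C, c p.2 = g (fun a => c a.1)

/-- The functional rank of a spanoid: the supremum of `log |C| / log |Σ|` over all finite
alphabets `Σ` (of size at least 2) and all codes `C ⊆ Σ^X` consistent with `S`. -/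
noncomputable def sFrank {X : Type} (S : SpanoidOn X) : ℝ :=
  sSup {d : ℝ | ∃ m : ℕ, 2 ≤ m ∧ ∃ C : Set (X → Fin m),
    sConsistent S C ∧ d = Real.log (Nat.card C) / Real.log m}

/-- Feasibility for the entropy linear program of a spanoid. -/
def sEntFeasible {X : Type} (S : SpanoidOn X) (f : Set X → ℝ) : Prop :=
  f ∅ = 0 ∧ (∀ i : X, f {i} ≤ 1) ∧
  (∀ A B : Set X, f (A ∪ B) + f (A ∩ B) ≤ f A + f B) ∧
  (∀ A B : Set X, A ⊆ B → f A ≤ f B) ∧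
  (∀ A : Set X, ∀ i ∈ sSpan S A, f (A ∪ {i}) = f A)

/-- The optimum of the entropy linear program: maximize `f(X)` over feasible `f`. -/
noncomputable def sLPentropy {X : Type} (S : SpanoidOn X) : ℝ :=
  sSup {y : ℝ | ∃ f : Set X → ℝ, sEntFeasible S f ∧ y = f Set.univ}

/-- The optimum of the covering linear program: minimize `∑ i, x i` over `x ≥ 0` such that
`∑_{i ∈ B} x i ≥ 1` for every nonempty open set `B`. -/
noncomputable def sLPcover {X : Type} [Fintype X] (S : SpanoidOn X) : ℝ :=
  sInf {y : ℝ | ∃ x : X → ℝ, (∀ i, 0 ≤ x i) ∧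
    (∀ B : Set X, B.Nonempty → sOpen S B → 1 ≤ ∑ i, B.indicator x i) ∧
    y = ∑ i, x i}

/-- A spanoid on `[n]` is a `q`-LCS with error-tolerance `δ` if every `i` is spanned by at
least `δ n` pairwise disjoint `q`-element subsets. -/
def sIsLCS {n : ℕ} (q : ℕ) (δ : ℝ) (S : SpanoidOn (Fin n)) : Prop :=
  ∀ i : Fin n, ∃ M : Finset (Finset (Fin n)),
    δ * n ≤ (M.card : ℝ) ∧
    (∀ A ∈ M, A.card = q) ∧
    ((M : Set (Finset (Fin n))).Pairwise fun A B => Disjoint A B) ∧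
    ∀ A ∈ M, ((A : Set (Fin n)), i) ∈ S

section helpers

/-- Bernoulli weight of a Boolean vector. -/
noncomputable def bw {α : Type} [Fintype α] (p : ℝ) (c : α → Bool) : ℝ :=
  ∏ i, (if c i = true then p else 1 - p)

lemma bw_nonneg {α : Type} [Fintype α] {p : ℝ} (h0 : 0 ≤ p) (h1 : p ≤ 1) (c : α → Bool) :
    0 ≤ bw p c := by
  unfold bw
  apply Finset.prod_nonneg
  intro i _
  split_ifs <;> linarith

lemma bw_sum_sub {α : Type} [Fintype α] [DecidableEq α] (p : ℝ) (B : Finset α) :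
    ∑ c : α → Bool, bw p c * (if ∀ i ∈ B, c i = true then (1 : ℝ) else 0) = p ^ B.card := by
  have h : ∀ c : α → Bool, bw p c * (if ∀ i ∈ B, c i = true then (1 : ℝ) else 0)
      = ∏ i, ((if c i = true then p else 1 - p) *
          (if i ∈ B → c i = true then (1 : ℝ) else 0)) := by
    intro c
    rw [Finset.prod_mul_distrib]
    unfold bw
    congr 1
    split_ifs with hc
    · symm
      apply Finset.prod_eq_one
      intro i _
      rw [if_pos (hc i)]
    · push Not at hc
      obtain ⟨i, hi, hci⟩ := hc
      symm
      apply Finset.prod_eq_zero (Finset.mem_univ i)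
      rw [if_neg]
      intro h
      exact hci (h hi)
  rw [Finset.sum_congr rfl (fun c _ => h c)]
  rw [← Fintype.prod_sum (fun (i : α) (b : Bool) => ((if b = true then p else 1 - p) *
          (if i ∈ B → b = true then (1 : ℝ) else 0)))]
  have h2 : ∀ i : α, ∑ b : Bool, ((if b = true then p else 1 - p) *
          (if i ∈ B → b = true then (1 : ℝ) else 0)) = if i ∈ B then p else 1 := by
    intro i
    by_cases hi : i ∈ B <;> simp [hi]
  rw [Finset.prod_congr rfl (fun i _ => h2 i)]
  simp [Finset.prod_ite]

lemma bw_sum {α : Type} [Fintype α] [DecidableEq α] (p : ℝ) :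
    ∑ c : α → Bool, bw p c = 1 := by
  have := bw_sum_sub p (∅ : Finset α)
  simpa using this

open Classical in
lemma bw_hit {α ι : Type} [Fintype α] [DecidableEq α] {p : ℝ} (h0 : 0 ≤ p) (h1 : p ≤ 1)
    (G : Finset ι) (B : ι → Finset α) (s : ℕ) (hs : ∀ a ∈ G, (B a).card = s)
    (hd : ∀ a ∈ G, ∀ b ∈ G, a ≠ b → Disjoint (B a) (B b))
    (hm : 1 / 2 ≤ (G.card : ℝ) * p ^ s) :
    1 / 3 ≤ ∑ c : α → Bool, bw p c *
      (if ∃ a ∈ G, ∀ i ∈ B a, c i = true then (1 : ℝ) else 0) := by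
  set μ : ℝ := (G.card : ℝ) * p ^ s with hμ
  set t : ℝ := 1 / (1 + μ) with ht
  let I : ι → (α → Bool) → ℝ := fun a c => if ∀ i ∈ B a, c i = true then (1 : ℝ) else 0
  let X : (α → Bool) → ℝ := fun c => ∑ a ∈ G, I a c
  have e1 : ∑ c, bw p c * X c = μ := by
    simp only [X, Finset.mul_sum]
    rw [Finset.sum_comm]
    rw [Finset.sum_congr rfl (fun a ha => (bw_sum_sub p (B a)).trans (by rw [hs a ha]))]
    simp [hμ]
  have e2 : ∑ c, bw p c * (X c) ^ 2 ≤ μ + μ ^ 2 := by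
    have hII : ∀ a b c, I a c * I b c = if ∀ i ∈ B a ∪ B b, c i = true then (1 : ℝ) else 0 := by
      intro a b c
      simp only [I, Finset.mem_union, or_imp, forall_and]
      split_ifs <;> simp_all
    have h3 : ∑ c, bw p c * (X c) ^ 2 = ∑ a ∈ G, ∑ b ∈ G, p ^ (B a ∪ B b).card := by
      simp only [X, pow_two, Finset.sum_mul_sum]
      simp only [Finset.mul_sum]
      rw [Finset.sum_comm]
      refine Finset.sum_congr rfl fun a _ => ?_
      rw [Finset.sum_comm]
      refine Finset.sum_congr rfl fun b _ => ?_
      rw [← bw_sum_sub p (B a ∪ B b)]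
      refine Finset.sum_congr rfl fun c _ => ?_
      rw [hII]
    rw [h3]
    have h4 : ∀ a ∈ G, ∀ b ∈ G, p ^ (B a ∪ B b).card ≤ (if a = b then p ^ s else 0) + p ^ s * p ^ s := by
      intro a ha b hb
      by_cases hab : a = b
      · subst hab
        simp only [Finset.union_self, if_true, hs a ha]
        have : 0 ≤ p ^ s := pow_nonneg h0 s
        nlinarith
      · rw [Finset.card_union_of_disjoint (hd a ha b hb hab), hs a ha, hs b hb, if_neg hab, pow_add]
        simp
    calc _ ≤ ∑ a ∈ G, ∑ b ∈ G, ((if a = b then p ^ s else 0) + p ^ s * p ^ s) :=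
          Finset.sum_le_sum fun a ha => Finset.sum_le_sum fun b hb => h4 a ha b hb
      _ = μ + μ ^ 2 := by
          simp only [Finset.sum_add_distrib, Finset.sum_ite_eq, Finset.sum_const, nsmul_eq_mul]
          rw [Finset.sum_ite_mem]
          simp [hμ]
          ring
  have e3 : ∀ c, bw p c * (2 * t * X c - t ^ 2 * X c ^ 2) ≤ bw p c *
      (if ∃ a ∈ G, ∀ i ∈ B a, c i = true then (1 : ℝ) else 0) := by
    intro c
    apply mul_le_mul_of_nonneg_left _ (bw_nonneg h0 h1 c)
    split_ifs with hc
    · nlinarith [sq_nonneg (1 - t * X c)]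
    · have : X c = 0 := by
        apply Finset.sum_eq_zero
        intro a ha
        simp only [I]
        rw [if_neg]
        intro h
        exact hc ⟨a, ha, h⟩
      rw [this]; simp
  have e4 := Finset.sum_le_sum (s := Finset.univ) fun c _ => e3 c
  refine le_trans ?_ e4
  have e5 : ∑ c, bw p c * (2 * t * X c - t ^ 2 * X c ^ 2)
      = 2 * t * (∑ c, bw p c * X c) - t ^ 2 * ∑ c, bw p c * X c ^ 2 := by
    rw [Finset.mul_sum, Finset.mul_sum, ← Finset.sum_sub_distrib]
    refine Finset.sum_congr rfl fun c _ => ?_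
    ring
  rw [e5, e1]
  have e6 : t ^ 2 * ∑ c, bw p c * X c ^ 2 ≤ t ^ 2 * (μ + μ ^ 2) :=
    mul_le_mul_of_nonneg_left e2 (sq_nonneg t)
  have htm : t * (1 + μ) = 1 := by rw [ht]; field_simp
  have e7 : t ^ 2 * (μ + μ ^ 2) = t * μ := by
    calc t ^ 2 * (μ + μ ^ 2) = t * μ * (t * (1 + μ)) := by ring
      _ = t * μ := by rw [htm, mul_one]
  have e8 : 1 / 3 ≤ t * μ := by
    rw [ht, div_mul_eq_mul_div, one_mul, div_le_div_iff₀ (by norm_num) (by linarith)]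
    linarith
  linarith

/-- Choice of a good random set. -/
lemma exists_good {α : Type} [Fintype α] [DecidableEq α] {p : ℝ} (h0 : 0 < p) (h1 : p ≤ 1)
    (Ts : Finset α) (E : α → (α → Bool) → Prop)
    (hE : ∀ i ∈ Ts, 1 / 3 ≤ ∑ c : α → Bool, bw p c *
      (by classical exact if E i c then (1 : ℝ) else 0)) :
    ∃ R Cov : Finset α, (R.card : ℝ) ≤ 6 * (Fintype.card α * p) ∧ Cov ⊆ Ts ∧
      (Ts.card : ℝ) / 6 ≤ Cov.card ∧ ∀ i ∈ Cov, E i (fun j => decide (j ∈ R)) := by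
  classical
  rcases Ts.eq_empty_or_nonempty with hT | hT
  · refine ⟨∅, ∅, ?_, by simp, by simp [hT], by simp⟩
    simp; positivity
  have hTpos : (0 : ℝ) < Ts.card := by exact_mod_cast hT.card_pos
  haveI : Nonempty α := ⟨hT.choose⟩
  have hn : (0 : ℝ) < Fintype.card α := by exact_mod_cast Fintype.card_pos
  set N : ℝ := Fintype.card α * p with hN
  have hNpos : 0 < N := by positivity
  let cov : (α → Bool) → ℝ := fun c => ∑ i ∈ Ts, if E i c then (1 : ℝ) else 0
  let sz : (α → Bool) → ℝ := fun c => ∑ i : α, if c i = true then (1 : ℝ) else 0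
  have a1 : (Ts.card : ℝ) / 3 ≤ ∑ c, bw p c * cov c := by
    simp only [cov, Finset.mul_sum]
    rw [Finset.sum_comm]
    calc (Ts.card : ℝ) / 3 = ∑ i ∈ Ts, (1 / 3 : ℝ) := by simp; ring
      _ ≤ _ := Finset.sum_le_sum fun i hi => by
        have := hE i hi
        convert this
  have a2 : ∑ c, bw p c * sz c = N := by
    simp only [sz, Finset.mul_sum]
    rw [Finset.sum_comm]
    have : ∀ i : α, ∑ c : α → Bool, bw p c * (if c i = true then (1 : ℝ) else 0) = p := by
      intro i
      have := bw_sum_sub p ({i} : Finset α)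
      simpa using this
    rw [Finset.sum_congr rfl fun i _ => this i]
    simp [hN]
  have a3 : ∑ c : α → Bool, bw p c * ((Ts.card : ℝ) / 6) ≤
      ∑ c, bw p c * (cov c - (Ts.card : ℝ) / 6 / N * sz c) := by
    rw [← Finset.sum_mul, bw_sum]
    have : ∑ c, bw p c * (cov c - (Ts.card : ℝ) / 6 / N * sz c)
        = ∑ c, bw p c * cov c - (Ts.card : ℝ) / 6 / N * ∑ c, bw p c * sz c := by
      rw [Finset.mul_sum, ← Finset.sum_sub_distrib]
      refine Finset.sum_congr rfl fun c _ => ?_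
      ring
    rw [this, a2, div_mul_cancel₀ _ hNpos.ne']
    linarith
  have a4 : ∃ c, (Ts.card : ℝ) / 6 ≤ cov c - (Ts.card : ℝ) / 6 / N * sz c := by
    by_contra hcon
    push Not at hcon
    have hle : ∀ c ∈ (Finset.univ : Finset (α → Bool)),
        bw p c * (cov c - (Ts.card : ℝ) / 6 / N * sz c) ≤ bw p c * ((Ts.card : ℝ) / 6) :=
      fun c _ => mul_le_mul_of_nonneg_left (hcon c).le (bw_nonneg h0.le h1 c)
    have hex : ∃ c ∈ (Finset.univ : Finset (α → Bool)), 0 < bw p c := by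
      by_contra h
      push Not at h
      have := Finset.sum_nonpos h
      rw [bw_sum] at this
      linarith
    obtain ⟨c, _, hc⟩ := hex
    have := Finset.sum_lt_sum hle ⟨c, Finset.mem_univ c, mul_lt_mul_of_pos_left (hcon c) hc⟩
    linarith
  obtain ⟨c, hc⟩ := a4
  have hcov : cov c = ((Ts.filter fun i => E i c).card : ℝ) := by simp [cov]
  have hsz : sz c = ((Finset.univ.filter fun i => c i = true).card : ℝ) := by simp [sz]
  have hsz0 : 0 ≤ sz c := by rw [hsz]; positivity
  have hcovle : cov c ≤ Ts.card := by
    rw [hcov]; exact_mod_cast Finset.card_filter_le _ _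
  refine ⟨Finset.univ.filter fun i => c i = true, Ts.filter fun i => E i c, ?_,
    Finset.filter_subset _ _, ?_, ?_⟩
  · rw [← hsz]
    have h5 : (Ts.card : ℝ) / 6 / N * sz c ≤ Ts.card := by linarith
    have h6 : (Ts.card : ℝ) / 6 / N * sz c = Ts.card * (sz c / (6 * N)) := by
      field_simp
    rw [h6] at h5
    have h7 : sz c / (6 * N) ≤ 1 := by
      by_contra h
      push Not at h
      nlinarith
    rw [div_le_one (by positivity)] at h7
    exact h7
  · rw [← hcov]
    have : 0 ≤ (Ts.card : ℝ) / 6 / N * sz c := by positivity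
    linarith
  · intro i hi
    have := (Finset.mem_filter.mp hi).2
    convert this using 2
    simp

/-- Reducing a root set along a partial map. -/
lemma root_reduce {α : Type} [DecidableEq α] (r : α → α → Prop) (hr : ∀ a, r a a)
    (ht : ∀ a b c, r a b → r b c → r a c) (T Cov : Finset α) (hC : Cov ⊆ T)
    (g : α → α) (hg : ∀ i ∈ Cov, g i ∈ T ∧ g i ≠ i ∧ r (g i) i) :
    ∃ T' : Finset α, T' ⊆ T ∧ (∀ t ∈ T, ∃ t' ∈ T', r t' t) ∧
      T'.card * 2 + Cov.card ≤ 2 * T.card := by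
  classical
  let P : Finset (Finset α) := T.powerset.filter fun U => ∀ t ∈ T, ∃ t' ∈ U, r t' t
  have hP : P.Nonempty := ⟨T, by simp only [P, Finset.mem_filter, Finset.mem_powerset]
                                 exact ⟨Finset.Subset.refl _, fun t h => ⟨t, h, hr t⟩⟩⟩
  obtain ⟨U, hU, hmin⟩ := Finset.exists_min_image P Finset.card hP
  simp only [P, Finset.mem_filter, Finset.mem_powerset] at hU hmin
  obtain ⟨hUT, hUc⟩ := hU
  refine ⟨U, hUT, hUc, ?_⟩
  have k1 : ∀ t ∈ U ∩ Cov, g t ∈ T \ U := by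
    intro t h
    rw [Finset.mem_inter] at h
    obtain ⟨h1, h2, h3⟩ := hg t h.2
    rw [Finset.mem_sdiff]
    refine ⟨h1, fun hin => ?_⟩
    have := hmin (U.erase t) ⟨(Finset.erase_subset _ _).trans hUT, fun s hs => ?_⟩
    · have h4 := Finset.card_erase_lt_of_mem h.1
      omega
    · obtain ⟨u, hu, hus⟩ := hUc s hs
      by_cases hut : u = t
      · subst hut
        exact ⟨g u, Finset.mem_erase.mpr ⟨h2, hin⟩, ht _ _ _ h3 hus⟩
      · exact ⟨u, Finset.mem_erase.mpr ⟨hut, hu⟩, hus⟩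
  have k2 : Set.InjOn g (U ∩ Cov : Finset α) := by
    intro t1 h1 t2 h2 he
    by_contra hne
    have hm := k1 t1 h1
    rw [Finset.mem_coe, Finset.mem_inter] at h1 h2
    obtain ⟨a1, a2, a3⟩ := hg t1 h1.2
    obtain ⟨b1, b2, b3⟩ := hg t2 h2.2
    have := hmin (insert (g t1) ((U.erase t1).erase t2)) ⟨?_, fun s hs => ?_⟩
    · have h4 := Finset.card_insert_le (g t1) ((U.erase t1).erase t2)
      have h5 : t2 ∈ U.erase t1 := Finset.mem_erase.mpr ⟨fun h => hne h.symm, h2.1⟩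
      have h6 := Finset.card_erase_lt_of_mem h5
      have h7 := Finset.card_erase_lt_of_mem h1.1
      omega
    · apply Finset.insert_subset a1
      exact (Finset.erase_subset _ _).trans ((Finset.erase_subset _ _).trans hUT)
    · obtain ⟨u, hu, hus⟩ := hUc s hs
      by_cases hu1 : u = t1
      · subst hu1
        exact ⟨g u, Finset.mem_insert_self _ _, ht _ _ _ a3 hus⟩
      by_cases hu2 : u = t2
      · subst hu2
        exact ⟨g t1, Finset.mem_insert_self _ _, ht _ _ _ (he ▸ b3) hus⟩
      · exact ⟨u, Finset.mem_insert_of_mem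
          (Finset.mem_erase.mpr ⟨hu2, Finset.mem_erase.mpr ⟨hu1, hu⟩⟩), hus⟩
  have k3 : (U ∩ Cov).card ≤ (T \ U).card := Finset.card_le_card_of_injOn g k1 k2
  have k4 : (Cov \ U).card ≤ (T \ U).card :=
    Finset.card_le_card (Finset.sdiff_subset_sdiff hC (Finset.Subset.refl _))
  have k5 := Finset.card_sdiff_add_card_eq_card hUT
  have k6 := Finset.card_sdiff_add_card_inter Cov U
  rw [Finset.inter_comm] at k6
  omega

lemma sub_sSpan {X : Type} (S : SpanoidOn X) (T : Set X) : T ⊆ sSpan S T :=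
  Set.subset_sInter fun _ h => h.1

lemma sSpan_rule {X : Type} (S : SpanoidOn X) (T : Set X) (A : Set X) (i : X)
    (hA : (A, i) ∈ S) (h : A ⊆ sSpan S T) : i ∈ sSpan S T := by
  rw [sSpan, Set.mem_sInter]
  intro T' hT'
  exact hT'.2 _ hA (h.trans (Set.sInter_subset_of_mem hT'))

lemma sSpan_le {X : Type} (S : SpanoidOn X) (T U : Set X) (h : T ⊆ sSpan S U) :
    sSpan S T ⊆ sSpan S U :=
  Set.sInter_subset_of_mem ⟨h, fun p hp hs => sSpan_rule S U p.1 p.2 hp hs⟩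

lemma sSpan_mono {X : Type} (S : SpanoidOn X) {T U : Set X} (h : T ⊆ U) :
    sSpan S T ⊆ sSpan S U := sSpan_le S T U (h.trans (sub_sSpan S U))

/-- One round. -/
lemma one_round {n q : ℕ} (hq : 3 ≤ q) {δ p : ℝ} (hδ : 0 < δ) (hp0 : 0 < p) (hp1 : p ≤ 1)
    (hp : p ^ (q - 1) * (δ * n) = 1) (S : SpanoidOn (Fin n)) (hS : sIsLCS q δ S)
    (V T : Finset (Fin n)) (f : Fin n → Fin n) (hfT : ∀ k, f k ∈ T)
    (hf : ∀ k, k ∈ sSpan S (insert (f k) (V : Set (Fin n)))) (hT : 4 * (n * p) ≤ T.card) :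
    ∃ (V' T' : Finset (Fin n)) (f' : Fin n → Fin n), (∀ k, f' k ∈ T') ∧
      (∀ k, k ∈ sSpan S (insert (f' k) (V' : Set (Fin n)))) ∧
      (V'.card : ℝ) ≤ V.card + 6 * (n * p) ∧ (T'.card : ℝ) ≤ 23 / 24 * T.card := by
  classical
  have hdn : 0 < δ * n := by
    by_contra h
    have : 0 ≤ p ^ (q - 1) := by positivity
    nlinarith
  choose M hM1 hM2 hM3 hM4 using hS
  let cl : Fin n → Finset (Fin n) := fun i => Finset.univ.filter fun k => f k = i
  let Ts := T.filter fun i => ((cl i).card : ℝ) ≤ δ * n / 2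
  let E : Fin n → (Fin n → Bool) → Prop := fun i c =>
    ∃ A ∈ M i, ∃ k ∈ A, f k ≠ i ∧ ∀ j ∈ A.erase k, c j = true
  -- number of large roots
  have hlarge : ((T \ Ts).card : ℝ) * (δ * n / 2) ≤ n := by
    have h1 : ∑ i ∈ T \ Ts, (cl i).card ≤ n := by
      calc ∑ i ∈ T \ Ts, (cl i).card ≤ ∑ i : Fin n, (cl i).card :=
            Finset.sum_le_sum_of_subset (Finset.subset_univ _)
        _ = n := by
            have := Finset.card_eq_sum_card_fiberwise (f := f) (s := Finset.univ)
              (t := Finset.univ) (fun x _ => Finset.mem_univ _)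
            simp only [Finset.card_univ, Fintype.card_fin] at this
            exact this.symm
    have h2 : ∑ i ∈ T \ Ts, (δ * n / 2) ≤ ∑ i ∈ T \ Ts, ((cl i).card : ℝ) := by
      apply Finset.sum_le_sum
      intro i hi
      simp only [Ts, Finset.mem_sdiff, Finset.mem_filter, not_and, not_le] at hi
      exact (hi.2 hi.1).le
    rw [Finset.sum_const, nsmul_eq_mul] at h2
    have h3 : (∑ i ∈ T \ Ts, ((cl i).card : ℝ)) ≤ n := by exact_mod_cast h1
    linarith
  have hpp : 1 ≤ p * (δ * n) := by
    rw [← hp]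
    apply mul_le_mul_of_nonneg_right _ hdn.le
    calc p ^ (q - 1) ≤ p ^ 1 := pow_le_pow_of_le_one hp0.le hp1 (by omega)
      _ = p := pow_one p
  have hnn : (0 : ℝ) ≤ n := Nat.cast_nonneg n
  have hlarge2 : ((T \ Ts).card : ℝ) ≤ 2 * (n * p) := by
    have : ((T \ Ts).card : ℝ) * (δ * n) ≤ 2 * (n * p) * (δ * n) := by nlinarith
    exact le_of_mul_le_mul_right this hdn
  have hTs : (T.card : ℝ) / 2 ≤ Ts.card := by
    have := Finset.card_sdiff_add_card_eq_card (Finset.filter_subset _ T : Ts ⊆ T)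
    have h : ((T \ Ts).card : ℝ) + Ts.card = T.card := by exact_mod_cast this
    linarith
  have hE : ∀ i ∈ Ts, 1 / 3 ≤ ∑ c : Fin n → Bool, bw p c *
      (by classical exact if E i c then (1 : ℝ) else 0) := by
    intro i hi
    have hcl : ((cl i).card : ℝ) ≤ δ * n / 2 := (Finset.mem_filter.mp hi).2
    let G := (M i).filter fun A => ∃ k ∈ A, f k ≠ i
    have hbad : ((M i).filter fun A => ¬ ∃ k ∈ A, f k ≠ i).card ≤ (cl i).card := by
      have hne : ∀ A ∈ M i, A.Nonempty := fun A hA => by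
        rw [← Finset.card_pos, hM2 i A hA]; omega
      let pick : Finset (Fin n) → Fin n := fun A => if h : A.Nonempty then h.choose else i
      have hpick : ∀ A ∈ M i, pick A ∈ A := fun A hA => by
        simp only [pick, dif_pos (hne A hA)]
        exact (hne A hA).choose_spec
      apply Finset.card_le_card_of_injOn pick
      · intro A hA
        rw [Finset.mem_coe, Finset.mem_filter] at hA
        have h2 := hA.2
        push Not at h2
        simp only [cl, Finset.coe_filter, Finset.mem_univ, true_and, Set.mem_setOf_eq]
        exact h2 _ (hpick A hA.1)
      · intro A hA A' hA' he
        rw [Finset.mem_coe, Finset.mem_filter] at hA hA'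
        by_contra hne'
        have := hM3 i hA.1 hA'.1 hne'
        exact Finset.disjoint_left.mp this (hpick A hA.1) (he ▸ hpick A' hA'.1)
    have hG : δ * n / 2 ≤ (G.card : ℝ) := by
      have h1 := Finset.card_filter_add_card_filter_not (s := M i) (fun A => ∃ k ∈ A, f k ≠ i)
      have h2 : (G.card : ℝ) + ((M i).filter fun A => ¬ ∃ k ∈ A, f k ≠ i).card = (M i).card := by
        exact_mod_cast h1
      have h3 : (((M i).filter fun A => ¬ ∃ k ∈ A, f k ≠ i).card : ℝ) ≤ (cl i).card := by
        exact_mod_cast hbad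
      have := hM1 i
      linarith
    let kk : Finset (Fin n) → Fin n := fun A => if h : ∃ k ∈ A, f k ≠ i then h.choose else i
    have hkk : ∀ A ∈ G, kk A ∈ A ∧ f (kk A) ≠ i := fun A hA => by
      have h := (Finset.mem_filter.mp hA).2
      simp only [kk, dif_pos h]
      exact h.choose_spec
    have := bw_hit hp0.le hp1 G (fun A => A.erase (kk A)) (q - 1)
      (fun A hA => by
        rw [Finset.card_erase_of_mem (hkk A hA).1, hM2 i A (Finset.mem_filter.mp hA).1])
      (fun A hA A' hA' hne => by
        have := hM3 i (Finset.mem_filter.mp hA).1 (Finset.mem_filter.mp hA').1 hne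
        exact Finset.disjoint_of_subset_left (Finset.erase_subset _ _)
          (Finset.disjoint_of_subset_right (Finset.erase_subset _ _) this))
      (by
        have : 0 ≤ p ^ (q - 1) := by positivity
        nlinarith)
    refine this.trans (Finset.sum_le_sum fun c _ => ?_)
    apply mul_le_mul_of_nonneg_left _ (bw_nonneg hp0.le hp1 c)
    by_cases hc : ∃ a ∈ G, ∀ j ∈ a.erase (kk a), c j = true
    · have hEc : E i c := by
        obtain ⟨A, hA, h⟩ := hc
        exact ⟨A, (Finset.mem_filter.mp hA).1, kk A, (hkk A hA).1, (hkk A hA).2, h⟩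
      rw [if_pos hc, if_pos hEc]
    · rw [if_neg hc]
      split_ifs <;> norm_num
  obtain ⟨R, Cov, hR, hCov, hCard, hEC⟩ := exists_good hp0 hp1 Ts E (fun i hi => by
    convert hE i hi)
  rw [Fintype.card_fin] at hR
  let V' := V ∪ R
  have hVV : (V : Set (Fin n)) ⊆ (V' : Set (Fin n)) := by
    simp [V']
  let r : Fin n → Fin n → Prop := fun a b => b ∈ sSpan S (insert a (V' : Set (Fin n)))
  have hr : ∀ a, r a a := fun a => sub_sSpan S _ (Set.mem_insert _ _)
  have htr : ∀ a b c, r a b → r b c → r a c := by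
    intro a b c hab hbc
    refine sSpan_le S _ _ ?_ hbc
    apply Set.insert_subset hab
    exact (Set.subset_insert _ _).trans (sub_sSpan S _)
  have hrf : ∀ k, r (f k) k := fun k => sSpan_mono S (Set.insert_subset_insert hVV) (hf k)
  have hedge : ∀ i ∈ Cov, ∃ s ∈ T, s ≠ i ∧ r s i := by
    intro i hi
    obtain ⟨A, hA, k, hkA, hki, hAR⟩ := hEC i hi
    refine ⟨f k, hfT k, hki, ?_⟩
    refine sSpan_rule S _ A i (hM4 i A hA) ?_
    intro j hj
    by_cases hjk : j = k
    · subst hjk; exact hrf j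
    · have : j ∈ R := by
        simpa using hAR j (Finset.mem_erase.mpr ⟨hjk, hj⟩)
      apply sub_sSpan
      right
      simp [V', this]
  let g : Fin n → Fin n := fun i => if h : i ∈ Cov then (hedge i h).choose else i
  have hg : ∀ i ∈ Cov, g i ∈ T ∧ g i ≠ i ∧ r (g i) i := fun i hi => by
    simp only [g, dif_pos hi]
    exact (hedge i hi).choose_spec
  obtain ⟨T', hT'T, hT'c, hT'card⟩ :=
    root_reduce r hr htr T Cov (hCov.trans (Finset.filter_subset _ _)) g hg
  choose! h hh1 hh2 using hT'c
  refine ⟨V', T', fun k => h (f k), fun k => hh1 _ (hfT k),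
    fun k => htr _ _ _ (hh2 _ (hfT k)) (hrf k), ?_, ?_⟩
  · have h1 : (V'.card : ℝ) ≤ V.card + R.card := by exact_mod_cast Finset.card_union_le V R
    linarith
  · have h1 : (T'.card : ℝ) * 2 + Cov.card ≤ 2 * T.card := by exact_mod_cast hT'card
    linarith

lemma all_rounds {n q : ℕ} (hn : 2 ≤ n) (hq : 3 ≤ q) {δ p : ℝ} (hδ : 0 < δ) (hp0 : 0 < p)
    (hp1 : p ≤ 1)
    (hp : p ^ (q - 1) * (δ * n) = 1) (S : SpanoidOn (Fin n)) (hS : sIsLCS q δ S) :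
    ∀ (m : ℕ) (V T : Finset (Fin n)) (f : Fin n → Fin n), T.card ≤ m → (∀ k, f k ∈ T) →
    (∀ k, k ∈ sSpan S (insert (f k) (V : Set (Fin n)))) →
    ∃ W : Finset (Fin n), sSpan S (W : Set (Fin n)) = Set.univ ∧
      (W.card : ℝ) ≤ V.card + 4 * (n * p) +
        6 * (n * p) * (Real.log T.card / Real.log (24 / 23)) := by
  have hl : 0 < Real.log (24 / 23) := Real.log_pos (by norm_num)
  have hnp : (0 : ℝ) ≤ n * p := by positivity
  intro m
  induction m with
  | zero =>
    intro V T f hm hfT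
    have : 0 < T.card := Finset.card_pos.mpr ⟨_, hfT ⟨0, by omega⟩⟩
    omega
  | succ m ih =>
    intro V T f hm hfT hf
    have hTpos : 0 < T.card := Finset.card_pos.mpr ⟨_, hfT ⟨0, by omega⟩⟩
    have hT1 : (1 : ℝ) ≤ T.card := by exact_mod_cast hTpos
    by_cases hT : 4 * (n * p) ≤ T.card
    · obtain ⟨V', T', f', h1, h2, h3, h4⟩ := one_round hq hδ hp0 hp1 hp S hS V T f hfT hf hT
      have hlt : T'.card < T.card := by
        have : (T'.card : ℝ) < T.card := by linarith
        exact_mod_cast this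
      obtain ⟨W, hW, hWc⟩ := ih V' T' f' (by omega) h1 h2
      refine ⟨W, hW, hWc.trans ?_⟩
      have hT'pos : 0 < T'.card := Finset.card_pos.mpr ⟨_, h1 ⟨0, by omega⟩⟩
      have h5 : Real.log T'.card + Real.log (24 / 23) ≤ Real.log T.card := by
        have hT'pos' : (0 : ℝ) < T'.card := by exact_mod_cast hT'pos
        rw [← Real.log_mul hT'pos'.ne' (by norm_num)]
        apply Real.log_le_log (by positivity)
        linarith
      have h6 : Real.log T'.card / Real.log (24 / 23) + 1 ≤
          Real.log T.card / Real.log (24 / 23) := by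
        rw [div_add_one hl.ne']
        exact div_le_div_of_nonneg_right h5 hl.le
      nlinarith
    · classical
      push Not at hT
      refine ⟨V ∪ T, ?_, ?_⟩
      · rw [Set.eq_univ_iff_forall]
        intro k
        refine sSpan_mono S ?_ (hf k)
        apply Set.insert_subset
        · simp [hfT k]
        · simp
      · have h1 : ((V ∪ T).card : ℝ) ≤ V.card + T.card := by
          exact_mod_cast Finset.card_union_le V T
        have h2 : 0 ≤ Real.log T.card / Real.log (24 / 23) :=
          div_nonneg (Real.log_nonneg hT1) hl.le
        have h3 : 0 ≤ 6 * (n * p) * (Real.log T.card / Real.log (24 / 23)) := by positivity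
        linarith

end helpers

/-- For every `q ≥ 3`, every `q`-LCS with error-tolerance `δ` on `[n]` has rank
at most `C_q · δ^{-1/(q-1)} · n^{(q-2)/(q-1)} · log₂ n`. -/
theorem q_LCS_rank_upper_bound :
    ∀ q : ℕ, 3 ≤ q → ∃ C : ℝ, 0 < C ∧ ∀ n : ℕ, 2 ≤ n → ∀ δ : ℝ, 0 < δ → δ ≤ 1 →
      ∀ S : SpanoidOn (Fin n), sIsLCS q δ S →
        (sRank S : ℝ) ≤ C * δ ^ (-(1 / ((q : ℝ) - 1))) *
          (n : ℝ) ^ (((q : ℝ) - 2) / ((q : ℝ) - 1)) * Real.logb 2 n := by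
  intro q hq
  have hl : 0 < Real.log (24 / 23) := Real.log_pos (by norm_num)
  have hl2 : 0 < Real.log 2 := Real.log_pos (by norm_num)
  refine ⟨4 + 6 * (Real.log 2 / Real.log (24 / 23)), by positivity, ?_⟩
  intro n hn δ hδ hδ1 S hS
  have hrank : ∀ W : Finset (Fin n), sSpan S (W : Set (Fin n)) = Set.univ →
      sRank S ≤ W.card := fun W hW =>
    Nat.sInf_le ⟨(W : Set (Fin n)), Set.ncard_coe_finset W, hW⟩
  have hnpos : (0 : ℝ) < n := by exact_mod_cast (by omega : 0 < n)
  have hq' : (3 : ℝ) ≤ q := by exact_mod_cast hq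
  have hqpos : (0 : ℝ) < (q : ℝ) - 1 := by linarith
  set p : ℝ := (δ * n) ^ (-(1 / ((q : ℝ) - 1))) with hpdef
  have hdn : 0 < δ * n := by positivity
  have hp0 : 0 < p := Real.rpow_pos_of_pos hdn _
  have hlog : 1 ≤ Real.logb 2 n := by
    rw [Real.le_logb_iff_rpow_le (by norm_num) hnpos, Real.rpow_one]
    exact_mod_cast hn
  have hB : δ ^ (-(1 / ((q : ℝ) - 1))) * (n : ℝ) ^ (((q : ℝ) - 2) / ((q : ℝ) - 1)) = n * p := by
    rw [hpdef, Real.mul_rpow hδ.le hnpos.le]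
    have : ((q : ℝ) - 2) / ((q : ℝ) - 1) = 1 + -(1 / ((q : ℝ) - 1)) := by
      field_simp; ring
    rw [this, Real.rpow_add hnpos, Real.rpow_one]
    ring
  rw [mul_assoc (4 + 6 * (Real.log 2 / Real.log (24 / 23))), hB]
  have hr0 : 0 ≤ Real.log 2 / Real.log (24 / 23) := by positivity
  by_cases h1 : 1 ≤ δ * n
  · have hp1 : p ≤ 1 := Real.rpow_le_one_of_one_le_of_nonpos h1 (by
      rw [neg_nonpos]; positivity)
    have hp : p ^ (q - 1) * (δ * n) = 1 := by
      rw [hpdef, ← Real.rpow_natCast, ← Real.rpow_mul hdn.le, Nat.cast_sub (by omega)]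
      have : -(1 / ((q : ℝ) - 1)) * ((q : ℝ) - (1 : ℕ)) = -1 := by
        push_cast
        field_simp
      rw [this, Real.rpow_neg_one]
      exact inv_mul_cancel₀ hdn.ne'
    obtain ⟨W, hW, hWc⟩ := all_rounds hn hq hδ hp0 hp1 hp S hS n ∅ Finset.univ id
      (by simp) (fun k => Finset.mem_univ _) (fun k => sub_sSpan S _ (Set.mem_insert _ _))
    have h2 : (sRank S : ℝ) ≤ W.card := by exact_mod_cast hrank W hW
    refine h2.trans (hWc.trans ?_)
    simp only [Finset.card_empty, Nat.cast_zero, Finset.card_univ, Fintype.card_fin, zero_add]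
    have h3 : Real.log n / Real.log (24 / 23) =
        Real.log 2 / Real.log (24 / 23) * Real.logb 2 n := by
      rw [Real.logb]; field_simp
    rw [h3]
    have h4 : 0 < n * p := by positivity
    nlinarith
  · push Not at h1
    have hp1 : 1 ≤ p := by
      rw [hpdef]
      exact Real.one_le_rpow_of_pos_of_le_one_of_nonpos hdn h1.le (by
        rw [neg_nonpos]; positivity)
    have h2 : (sRank S : ℝ) ≤ n := by
      have := hrank Finset.univ (by
        rw [Set.eq_univ_iff_forall]
        intro k
        exact sub_sSpan S _ (by simp))
      simp only [Finset.card_univ, Fintype.card_fin] at this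
      exact_mod_cast this
    have h3 : (n : ℝ) ≤ n * p := by nlinarith
    have h4 : (n : ℝ) * p ≤ (4 + 6 * (Real.log 2 / Real.log (24 / 23))) * (n * p) := by nlinarith
    have h5 : 0 ≤ (4 + 6 * (Real.log 2 / Real.log (24 / 23))) * (n * p) := by positivity
    have h6 := mul_le_mul_of_nonneg_left hlog h5
    linarith
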